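/- arXiv:2508.11533 — 2 statements merged into one kernel-verified Lean document; each statement's English description precedes it below -/
import Mathlib

section
/- Ellipsoidal parametrization of the consistency set: let 𝐀 ∈ ℝ^{p×p} be symmetric positive definite, 𝐐 ∈ ℝ^{N×N} symmetric positive semidefinite, and 𝛇 ∈ ℝ^{p×N}. Then {𝐙 ∈ ℝ^{p×N} : (𝐙 − 𝛇)ᵀ𝐀(𝐙 − 𝛇) ⪯ 𝐐} = {𝛇 + 𝐀^{−1/2} 𝛄 𝐐^{1/2} : 𝛄 ∈ ℝ^{p×N}, ‖𝛄‖ ≤ 1}, where 𝐀^{1/2} and 𝐐^{1/2} denote the positive semidefinite square roots of 𝐀 and 𝐐, 𝐀^{−1/2} = (𝐀^{1/2})⁻¹, and ‖·‖ is the spectral norm. -/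
open Matrix
open scoped Matrix.Norms.L2Operator MatrixOrder

/-- A linear map dominated in norm by `L` factors through `L` by a contraction. -/
theorem LinearMap.exists_contraction_comp_eq {𝕜 E F G : Type*} [RCLike 𝕜]
    [NormedAddCommGroup E] [InnerProductSpace 𝕜 E] [FiniteDimensional 𝕜 E]
    [AddCommGroup F] [Module 𝕜 F] [NormedAddCommGroup G] [NormedSpace 𝕜 G]
    (L : F →ₗ[𝕜] E) (M : F →ₗ[𝕜] G) (h : ∀ x, ‖M x‖ ≤ ‖L x‖) :
    ∃ g : E →ₗ[𝕜] G, (∀ x, ‖g x‖ ≤ ‖x‖) ∧ g ∘ₗ L = M := by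
  obtain ⟨s, hs⟩ := L.rangeRestrict.exists_rightInverse_of_surjective L.range_rangeRestrict
  have hLs (y : L.range) : L (s y) = y := congrArg Subtype.val (LinearMap.congr_fun hs y)
  refine ⟨M ∘ₗ s ∘ₗ L.range.orthogonalProjectionOnto.toLinearMap, fun x ↦ ?_, ?_⟩
  · refine (h _).trans ?_
    simp only [LinearMap.comp_apply, hLs]
    exact L.range.norm_orthogonalProjectionOnto_apply_le x
  · ext y
    have hproj : L.range.orthogonalProjectionOnto (L y) = ⟨L y, L.mem_range_self y⟩ :=
      Submodule.orthogonalProjectionOnto_mem_subspace_eq_self (K := L.range) ⟨L y, L.mem_range_self y⟩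
    have hle := h (s ⟨L y, L.mem_range_self y⟩ - y)
    rw [map_sub L, hLs, sub_self, norm_zero] at hle
    simpa [hproj, sub_eq_zero] using hle

namespace Matrix

variable {l m n : Type*} [Fintype l] [Fintype m] [Fintype n] [DecidableEq n]

theorem dotProduct_conjTranspose_mul_self_mulVec (B : Matrix m n ℝ) (x : n → ℝ) :
    star x ⬝ᵥ ((Bᴴ * B) *ᵥ x) = ‖toEuclideanLin B (WithLp.toLp 2 x)‖ ^ 2 := by
  rw [← mulVec_mulVec, dotProduct_mulVec, vecMul_conjTranspose, star_star,
    EuclideanSpace.real_norm_sq_eq]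
  simp [dotProduct, sq]

theorem posSemidef_conjTranspose_mul_self_sub_iff (B : Matrix l n ℝ) (W : Matrix m n ℝ) :
    (Bᴴ * B - Wᴴ * W).PosSemidef ↔
      ∀ x, ‖toEuclideanLin W x‖ ≤ ‖toEuclideanLin B x‖ := by
  have hH : (Bᴴ * B - Wᴴ * W).IsHermitian :=
    (isHermitian_conjTranspose_mul_self B).sub (isHermitian_conjTranspose_mul_self W)
  simp only [posSemidef_iff_dotProduct_mulVec, hH, true_and, sub_mulVec, dotProduct_sub,
    dotProduct_conjTranspose_mul_self_mulVec, sub_nonneg,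
    sq_le_sq₀ (norm_nonneg _) (norm_nonneg _)]
  exact ⟨fun h x ↦ h x.ofLp, fun h x ↦ h _⟩

theorem l2_opNorm_le_one_iff (γ : Matrix m n ℝ) :
    ‖γ‖ ≤ 1 ↔ ∀ x, ‖toEuclideanLin γ x‖ ≤ ‖x‖ := by
  rw [l2_opNorm_def, ContinuousLinearMap.opNorm_le_iff zero_le_one]
  simp

/-- Finite-dimensional Douglas factorization: `Wᴴ W ⪯ Bᴴ B` iff `W = γ B` with `γ` a contraction. -/
theorem posSemidef_conjTranspose_mul_self_sub_iff_exists [DecidableEq l]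
    (B : Matrix l n ℝ) (W : Matrix m n ℝ) :
    (Bᴴ * B - Wᴴ * W).PosSemidef ↔ ∃ γ : Matrix m l ℝ, ‖γ‖ ≤ 1 ∧ W = γ * B := by
  rw [posSemidef_conjTranspose_mul_self_sub_iff]
  constructor
  · intro h
    obtain ⟨g, hg, hgB⟩ := LinearMap.exists_contraction_comp_eq _ _ h
    refine ⟨toEuclideanLin.symm g, ?_, toEuclideanLin.injective ?_⟩
    · simpa [l2_opNorm_le_one_iff] using hg
    · rw [← hgB]
      ext x : 1
      simp [toEuclideanLin, toLpLin_mul_same]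
  · rintro ⟨γ, hγ, rfl⟩ x
    simpa [toLpLin_apply, mulVec_mulVec] using
      (l2_opNorm_le_one_iff γ).1 hγ (toEuclideanLin B x)

end Matrix

/-- **Ellipsoidal parametrization of the consistency set.**
For symmetric `𝐀 ≻ 0`, symmetric `𝐐 ⪰ 0` and `𝛇`:
`{𝐙 : (𝐙 − 𝛇)ᵀ𝐀(𝐙 − 𝛇) ⪯ 𝐐} = {𝛇 + 𝐀^{−1/2} 𝛄 𝐐^{1/2} : ‖𝛄‖ ≤ 1}`,
with `‖·‖` the spectral (ℓ²-operator) norm and the positive semidefinite square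
roots `𝐀^{1/2}`, `𝐐^{1/2}`. -/
theorem consistency_set_ellipsoid {p N : ℕ}
    (mA : Matrix (Fin p) (Fin p) ℝ) (hA : mA.IsSymm) (hApd : mA.PosDef)
    (Q : Matrix (Fin N) (Fin N) ℝ) (hQ : Q.IsSymm) (hQpsd : Q.PosSemidef)
    (ζ : Matrix (Fin p) (Fin N) ℝ) :
    {mZ : Matrix (Fin p) (Fin N) ℝ | (Q - (mZ - ζ)ᵀ * mA * (mZ - ζ)).PosSemidef} =
      {mZ : Matrix (Fin p) (Fin N) ℝ |
        ∃ γ : Matrix (Fin p) (Fin N) ℝ, ‖γ‖ ≤ 1 ∧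
          mZ = ζ + (CFC.sqrt mA)⁻¹ * γ * CFC.sqrt Q} := by
  ext mZ
  have hR : IsUnit (CFC.sqrt mA).det :=
    (isUnit_iff_isUnit_det _).1 hApd.isStrictlyPositive.isUnit_cfcSqrt
  have hRH : (CFC.sqrt mA)ᴴ = CFC.sqrt mA := (CFC.sqrt_nonneg mA).posSemidef.isHermitian
  have hSH : (CFC.sqrt Q)ᴴ = CFC.sqrt Q := (CFC.sqrt_nonneg Q).posSemidef.isHermitian
  have hRR := CFC.sqrt_mul_sqrt_self mA hApd.posSemidef.nonneg
  have hSS := CFC.sqrt_mul_sqrt_self Q hQpsd.nonneg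
  have key : Q - (mZ - ζ)ᵀ * mA * (mZ - ζ) = (CFC.sqrt Q)ᴴ * CFC.sqrt Q -
      (CFC.sqrt mA * (mZ - ζ))ᴴ * (CFC.sqrt mA * (mZ - ζ)) := by
    rw [conjTranspose_mul, hRH, hSH, hSS, Matrix.mul_assoc _ (CFC.sqrt mA),
      ← Matrix.mul_assoc (CFC.sqrt mA), hRR, conjTranspose_eq_transpose_of_trivial,
      Matrix.mul_assoc]
  simp only [Set.mem_ofPred_eq, key, posSemidef_conjTranspose_mul_self_sub_iff_exists]
  refine exists_congr fun γ ↦ and_congr_right fun _ ↦ ⟨fun h ↦ ?_, ?_⟩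
  · rw [Matrix.mul_assoc, ← h, nonsing_inv_mul_cancel_left _ _ hR, add_sub_cancel]
  · rintro rfl
    rw [add_sub_cancel_left, Matrix.mul_assoc, mul_nonsing_inv_cancel_left _ _ hR]
end

section
/- Matrix-analytic core of Theorem 1 (direct data-driven control, single-input case): let N, T be positive integers, Z₀ ∈ ℝ^{N×T}, U₀ ∈ ℝ^{1×T}, V₀ ∈ ℝ^{N×T}, Z₁ ∈ ℝ^{N×T}, Δ ∈ ℝ^{N×N}; let W₀ ∈ ℝ^{(2N+1)×T} be the vertical stack of Z₀, U₀, V₀ and set 𝐀 = W₀W₀ᵀ, 𝐁 = −W₀Z₁ᵀ, 𝐂 = Z₁Z₁ᵀ − ΔΔᵀ. Assume W₀ has full row rank. Let P ∈ ℝ^{N×N} be symmetric positive definite, L ∈ ℝ^{N×1}, and let μ, ν, τ, c, c₁, c₂, α, β be positive scalars with 1/α + 1/β = 1. Let M₁ ∈ ℝ^{(2N+1)×N} be the vertical stack of P, Lᵀ, 0_{N×N} and M₂ ∈ ℝ^{(2N+1)×N} the vertical stack of 0_{N×N}, 0_{1×N}, P. Suppose the symmetric block matrix G with block rows/columns of sizes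 (N, N, 2N+1, 1, N, 1) given by G₁₁ = −(1/μ)𝐂 + τI_N, G₁₂ = 0, G₁₃ = (M₁ − (1/μ)𝐁)ᵀ, G₁₄ = L, G₁₅ = P, G₁₆ = L, G₂₂ = −(1/ν)P, G₂₃ = −M₂ᵀ, G₂₄ = G₂₅ = G₂₆ = 0, G₃₃ = −(1/μ)𝐀, G₃₄ = G₃₅ = G₃₆ = 0, G₄₄ = −ν/c, G₅₅ = −(τ/(αc₁²))I_N, G₆₆ = −τ/(βc₂²), G₄₅ = G₄₆ = G₅₆ = 0 (the remaining blocks determined by symmetry) is negative definite. Then for every A ∈ ℝ^{N×N}, B₀ ∈ ℝ^{N×1}, B₁ ∈ ℝ^{N×N} and every D₀ ∈ ℝ^{N×T} with D₀D₀ᵀ ⪯ ΔΔᵀ and Z₁ = AZ₀ + B₀U₀ + B₁V₀ + D₀, it holds that PAᵀ + AP + LB₀ᵀ + B₀Lᵀ + νB₁PB₁ᵀ + τI_N + ν⁻¹cLLᵀ + τ⁻¹(αc₁²P² + βc₂²LLᵀ) ≺ 0. -/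
open Matrix

/-- Addition of vertically stacked matrices is blockwise. -/
theorem fromRows_add_fromRows {m₁ m₂ n R : Type*} [Add R] (A₁ B₁ : Matrix m₁ n R)
    (A₂ B₂ : Matrix m₂ n R) :
    fromRows A₁ A₂ + fromRows B₁ B₂ = fromRows (A₁ + B₁) (A₂ + B₂) := by
  ext (i | i) j <;> rfl

/-- The residual of the data equation `Z = Θ W + D`, expanded as a quadratic form in `Θ`. -/
theorem residual_mul_transpose {m n t : Type*} [Fintype n] [Fintype t]
    (Z D : Matrix m t ℝ) (W : Matrix n t ℝ) (Θ : Matrix m n ℝ) (h : Z = Θ * W + D) :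
    D * Dᵀ = Z * Zᵀ - Z * Wᵀ * Θᵀ - Θ * (W * Zᵀ) + Θ * (W * Wᵀ) * Θᵀ := by
  obtain rfl : D = Z - Θ * W := by rw [h]; abel
  simp only [transpose_sub, transpose_mul, Matrix.sub_mul, Matrix.mul_sub, Matrix.mul_assoc]
  abel

/-- Congruence by a column whose top block is the identity preserves positive definiteness. -/
theorem posDef_congr_fromRows_one {m n : Type*} [Fintype m] [Fintype n] [DecidableEq m]
    {H : Matrix (m ⊕ n) (m ⊕ n) ℝ} (hH : H.PosDef) (S : Matrix n m ℝ) :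
    ((fromRows (1 : Matrix m m ℝ) S)ᵀ * H * fromRows (1 : Matrix m m ℝ) S).PosDef := by
  rw [← conjTranspose_eq_transpose_of_trivial]
  refine hH.conjTranspose_mul_mul_same fun x y hxy => ?_
  simpa [fromRows_mulVec] using congrArg (fun v => v ∘ Sum.inl) hxy

/-- **Matrix-analytic core of Theorem 1 (direct data-driven control, single-input
case).**  If the `6×6` block LMI matrix `G` (block sizes `N, N, 2N+1, 1, N, 1`)
built from the noisy data is negative definite, then every bilinear system
`(A, B₀, B₁)` consistent with the noisy data (i.e. `Z₁ = AZ₀ + B₀U₀ + B₁V₀ + D₀`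
for some `D₀` with `D₀D₀ᵀ ⪯ ΔΔᵀ`) satisfies the robust-stabilization matrix
inequality of Proposition 1. -/
theorem theorem1_direct_data_driven {N T : ℕ} (hN : 0 < N) (hT : 0 < T)
    (Z₀ : Matrix (Fin N) (Fin T) ℝ) (U₀ : Matrix (Fin 1) (Fin T) ℝ)
    (V₀ : Matrix (Fin N) (Fin T) ℝ) (Z₁ : Matrix (Fin N) (Fin T) ℝ)
    (Δ : Matrix (Fin N) (Fin N) ℝ)
    (W₀ : Matrix (Fin N ⊕ (Fin 1 ⊕ Fin N)) (Fin T) ℝ)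
    (hW₀ : W₀ = fromRows Z₀ (fromRows U₀ V₀))
    (hW₀rank : W₀.rank = 2 * N + 1)
    (mA : Matrix (Fin N ⊕ (Fin 1 ⊕ Fin N)) (Fin N ⊕ (Fin 1 ⊕ Fin N)) ℝ)
    (hmA : mA = W₀ * W₀ᵀ)
    (mB : Matrix (Fin N ⊕ (Fin 1 ⊕ Fin N)) (Fin N) ℝ)
    (hmB : mB = -(W₀ * Z₁ᵀ))
    (mC : Matrix (Fin N) (Fin N) ℝ)
    (hmC : mC = Z₁ * Z₁ᵀ - Δ * Δᵀ)
    (P : Matrix (Fin N) (Fin N) ℝ) (hP : P.IsSymm) (hPpd : P.PosDef)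
    (L : Matrix (Fin N) (Fin 1) ℝ)
    (μ ν τ c c₁ c₂ α β : ℝ)
    (hμ : 0 < μ) (hν : 0 < ν) (hτ : 0 < τ) (hc : 0 < c) (hc₁ : 0 < c₁)
    (hc₂ : 0 < c₂) (hα : 0 < α) (hβ : 0 < β) (hαβ : 1 / α + 1 / β = 1)
    (M₁ : Matrix (Fin N ⊕ (Fin 1 ⊕ Fin N)) (Fin N) ℝ)
    (hM₁ : M₁ = fromRows P (fromRows Lᵀ (0 : Matrix (Fin N) (Fin N) ℝ)))
    (M₂ : Matrix (Fin N ⊕ (Fin 1 ⊕ Fin N)) (Fin N) ℝ)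
    (hM₂ : M₂ = fromRows (0 : Matrix (Fin N) (Fin N) ℝ)
      (fromRows (0 : Matrix (Fin 1) (Fin N) ℝ) P))
    (G : Matrix
      (Fin N ⊕ (Fin N ⊕ ((Fin N ⊕ (Fin 1 ⊕ Fin N)) ⊕ (Fin 1 ⊕ (Fin N ⊕ Fin 1)))))
      (Fin N ⊕ (Fin N ⊕ ((Fin N ⊕ (Fin 1 ⊕ Fin N)) ⊕ (Fin 1 ⊕ (Fin N ⊕ Fin 1))))) ℝ)
    (hG : G =
      fromBlocks
        ((-(1 / μ)) • mC + τ • (1 : Matrix (Fin N) (Fin N) ℝ))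
        (fromCols (0 : Matrix (Fin N) (Fin N) ℝ)
          (fromCols ((M₁ - (1 / μ) • mB)ᵀ)
            (fromCols L (fromCols P L))))
        (fromRows (0 : Matrix (Fin N) (Fin N) ℝ)
          (fromRows (M₁ - (1 / μ) • mB)
            (fromRows Lᵀ (fromRows Pᵀ Lᵀ))))
        (fromBlocks
          ((-(1 / ν)) • P)
          (fromCols (-M₂ᵀ)
            (fromCols (0 : Matrix (Fin N) (Fin 1) ℝ)
              (fromCols (0 : Matrix (Fin N) (Fin N) ℝ) (0 : Matrix (Fin N) (Fin 1) ℝ))))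
          (fromRows (-M₂)
            (fromRows (0 : Matrix (Fin 1) (Fin N) ℝ)
              (fromRows (0 : Matrix (Fin N) (Fin N) ℝ) (0 : Matrix (Fin 1) (Fin N) ℝ))))
          (fromBlocks
            ((-(1 / μ)) • mA)
            (fromCols (0 : Matrix (Fin N ⊕ (Fin 1 ⊕ Fin N)) (Fin 1) ℝ)
              (fromCols (0 : Matrix (Fin N ⊕ (Fin 1 ⊕ Fin N)) (Fin N) ℝ)
                (0 : Matrix (Fin N ⊕ (Fin 1 ⊕ Fin N)) (Fin 1) ℝ)))
            (fromRows (0 : Matrix (Fin 1) (Fin N ⊕ (Fin 1 ⊕ Fin N)) ℝ)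
              (fromRows (0 : Matrix (Fin N) (Fin N ⊕ (Fin 1 ⊕ Fin N)) ℝ)
                (0 : Matrix (Fin 1) (Fin N ⊕ (Fin 1 ⊕ Fin N)) ℝ)))
            (fromBlocks
              ((-(ν / c)) • (1 : Matrix (Fin 1) (Fin 1) ℝ))
              (fromCols (0 : Matrix (Fin 1) (Fin N) ℝ) (0 : Matrix (Fin 1) (Fin 1) ℝ))
              (fromRows (0 : Matrix (Fin N) (Fin 1) ℝ) (0 : Matrix (Fin 1) (Fin 1) ℝ))
              (fromBlocks
                ((-(τ / (α * c₁ ^ 2))) • (1 : Matrix (Fin N) (Fin N) ℝ))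
                (0 : Matrix (Fin N) (Fin 1) ℝ)
                (0 : Matrix (Fin 1) (Fin N) ℝ)
                ((-(τ / (β * c₂ ^ 2))) • (1 : Matrix (Fin 1) (Fin 1) ℝ)))))))
    (hGneg : (-G).PosDef) :
    ∀ (A B₁ : Matrix (Fin N) (Fin N) ℝ) (B₀ : Matrix (Fin N) (Fin 1) ℝ)
      (D₀ : Matrix (Fin N) (Fin T) ℝ),
      (Δ * Δᵀ - D₀ * D₀ᵀ).PosSemidef →
      Z₁ = A * Z₀ + B₀ * U₀ + B₁ * V₀ + D₀ →
      (-(P * Aᵀ + A * P + L * B₀ᵀ + B₀ * Lᵀ + ν • (B₁ * P * B₁ᵀ) +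
          τ • (1 : Matrix (Fin N) (Fin N) ℝ) + (ν⁻¹ * c) • (L * Lᵀ) +
          τ⁻¹ • ((α * c₁ ^ 2) • (P * P) + (β * c₂ ^ 2) • (L * Lᵀ)))).PosDef := by
  intro A B₁ B₀ D₀ hD hZ
  set Θ : Matrix (Fin N) (Fin N ⊕ (Fin 1 ⊕ Fin N)) ℝ := fromCols A (fromCols B₀ B₁) with hΘ
  have hZΘ : Z₁ = Θ * W₀ + D₀ := by
    rw [hZ, hΘ, hW₀, fromCols_mul_fromRows, fromCols_mul_fromRows, ← add_assoc]
  have hres := residual_mul_transpose Z₁ D₀ W₀ Θ hZΘ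
  have hΘM₁ : Θ * M₁ = A * P + B₀ * Lᵀ := by
    simp [hΘ, hM₁, fromCols_mul_fromRows]
  have hM₁Θ : M₁ᵀ * Θᵀ = P * Aᵀ + L * B₀ᵀ := by
    rw [← transpose_mul, hΘM₁]
    simp [hP.eq]
  have hΘM₂ : Θ * M₂ = B₁ * P := by
    simp [hΘ, hM₂, fromCols_mul_fromRows]
  have hΘM₂B : Θ * (M₂ * B₁ᵀ) = B₁ * (P * B₁ᵀ) := by
    rw [← Matrix.mul_assoc, hΘM₂, Matrix.mul_assoc]
  have hM₂Θ : M₂ᵀ * Θᵀ = P * B₁ᵀ := by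
    rw [← transpose_mul, hΘM₂]
    simp [hP.eq]
  clear_value Θ
  have hcongr := posDef_congr_fromRows_one hGneg
    (fromRows (-(ν • B₁ᵀ)) (fromRows Θᵀ (fromRows ((c / ν) • Lᵀ)
      (fromRows ((α * c₁ ^ 2 / τ) • P) ((β * c₂ ^ 2 / τ) • Lᵀ)))))
  convert hcongr.add_posSemidef (hD.smul (inv_pos.mpr hμ).le) using 1
  rw [hres, hG, hmA, hmB, hmC]
  simp only [Matrix.mul_neg, Matrix.neg_mul, Matrix.mul_assoc, fromBlocks_mul_fromRows,
    fromCols_mul_fromRows, transpose_fromRows, fromRows_mul, fromRows_add_fromRows,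
    transpose_one, transpose_neg, transpose_smul, transpose_transpose, transpose_sub,
    transpose_mul, Matrix.mul_one, Matrix.one_mul, Matrix.zero_mul, Matrix.mul_zero, hP.eq,
    Matrix.mul_add, Matrix.sub_mul, Matrix.mul_sub, Matrix.smul_mul,
    Matrix.mul_smul, hΘM₁, hM₁Θ, hΘM₂B, hM₂Θ, add_zero, zero_add]
  match_scalars <;> field_simp <;> ring
end
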